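/- For integers x ≥ 2, d ≥ 1, and a natural number m with x^j ≤ m < x^{j+1} for some j < d (so x^j is the largest coin not exceeding m), the minimum coin count satisfies the recursion κ(m) = 1 + κ(m − x^j). -/

import Mathlib

/-- The coin set `{x^0, x^1, …, x^(d-1)}`. -/
def coins (x d : ℕ) : Set ℕ := {c | ∃ i < d, c = x ^ i}

/-- `κ(m)`: the minimum cardinality of a multiset of coins from `coins x d` summing to `m`. -/
noncomputable def kappa (x d m : ℕ) : ℕ :=
  sInf {k | ∃ M : Multiset ℕ, (∀ c ∈ M, c ∈ coins x d) ∧ M.sum = m ∧ M.card = k}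

theorem sum_lt_of_counts (x : ℕ) (j : ℕ) : ∀ M : Multiset ℕ,
    (∀ c ∈ M, ∃ i < j, c = x ^ i) → (∀ i < j, M.count (x ^ i) < x) → M.sum < x ^ j := by
  induction j with
  | zero =>
    intro M h _
    have : M = 0 := Multiset.eq_zero_of_forall_notMem (fun c hc => by
      obtain ⟨i, hi, _⟩ := h c hc
      omega)
    simp [this]
  | succ j ih =>
    intro M h hc
    have hs := congrArg Multiset.sum (Multiset.filter_add_not (fun c => c = x ^ j) M)
    rw [Multiset.sum_add, Multiset.filter_eq', Multiset.sum_replicate, smul_eq_mul] at hs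
    have h1 := ih (M.filter (fun c => ¬ c = x ^ j)) (by
      intro c hcm
      rw [Multiset.mem_filter] at hcm
      obtain ⟨i, hi, rfl⟩ := h c hcm.1
      refine ⟨i, ?_, rfl⟩
      have : i ≠ j := by
        rintro rfl
        exact hcm.2 rfl
      omega) (fun i hi => lt_of_le_of_lt
        (Multiset.count_le_of_le _ (Multiset.filter_le _ _)) (hc i (by omega)))
    have h2 := hc j (by omega)
    have h3 : (M.count (x ^ j) + 1) * x ^ j ≤ x * x ^ j := Nat.mul_le_mul_right _ h2
    rw [pow_succ']
    linarith

/-- The minimum in the definition of `kappa` is attained. -/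
theorem kappa_attained (x d m : ℕ) (hd : 1 ≤ d) :
    ∃ M : Multiset ℕ, (∀ c ∈ M, c ∈ coins x d) ∧ M.sum = m ∧ M.card = kappa x d m := by
  have hne : {k | ∃ M : Multiset ℕ, (∀ c ∈ M, c ∈ coins x d) ∧ M.sum = m ∧
      M.card = k}.Nonempty := by
    refine ⟨m, Multiset.replicate m 1, ?_, by simp, by simp⟩
    intro c hc
    exact ⟨0, hd, by simpa using Multiset.eq_of_mem_replicate hc⟩
  exact Nat.sInf_mem hne

theorem kappa_le (x d : ℕ) (M : Multiset ℕ) (h : ∀ c ∈ M, c ∈ coins x d) :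
    kappa x d M.sum ≤ M.card :=
  Nat.sInf_le ⟨M, h, rfl, rfl⟩

/-- For `x ≥ 2`, `d ≥ 1` and `x^j ≤ m < x^(j+1)` with `j < d` (so `x^j` is the largest
coin not exceeding `m`), the minimum coin count satisfies the greedy recursion
`κ(m) = 1 + κ(m - x^j)`. -/
theorem kappa_greedy_recursion (x d m j : ℕ) (hx : 2 ≤ x) (hd : 1 ≤ d) (hj : j < d)
    (h1 : x ^ j ≤ m) (h2 : m < x ^ (j + 1)) :
    kappa x d m = 1 + kappa x d (m - x ^ j) := by
  apply le_antisymm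
  · obtain ⟨M, hM, hs, hk⟩ := kappa_attained x d (m - x ^ j) hd
    have h := kappa_le x d (x ^ j ::ₘ M) (by
      intro c hc
      rcases Multiset.mem_cons.1 hc with rfl | hc
      · exact ⟨j, hj, rfl⟩
      · exact hM c hc)
    rw [Multiset.sum_cons, Multiset.card_cons, hs, hk, Nat.add_sub_cancel' h1] at h
    omega
  · obtain ⟨M, hM, hs, hk⟩ := kappa_attained x d m hd
    have hmem : x ^ j ∈ M := by
      by_contra hnot
      have hlt : M.sum < x ^ j := by
        apply sum_lt_of_counts x j M
        · intro c hc
          obtain ⟨i, hi, rfl⟩ := hM c hc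
          refine ⟨i, ?_, rfl⟩
          have hle : x ^ i ≤ m := hs ▸ Multiset.le_sum_of_mem hc
          have hij : i < j + 1 := (Nat.pow_lt_pow_iff_right (by omega)).1 (hle.trans_lt h2)
          have : i ≠ j := by
            rintro rfl
            exact hnot hc
          omega
        · intro i hi
          by_contra hcount
          obtain ⟨N, rfl⟩ := Multiset.le_iff_exists_add.1
            (Multiset.le_count_iff_replicate_le.1 (not_lt.1 hcount))
          have h := kappa_le x d (x ^ (i + 1) ::ₘ N) (by
            intro c hc
            rcases Multiset.mem_cons.1 hc with rfl | hc
            · exact ⟨i + 1, by omega, rfl⟩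
            · exact hM c (Multiset.mem_add.2 (Or.inr hc)))
          rw [Multiset.sum_add, Multiset.sum_replicate, smul_eq_mul, ← pow_succ'] at hs
          rw [Multiset.sum_cons, hs, Multiset.card_cons, ← hk, Multiset.card_add,
            Multiset.card_replicate] at h
          omega
      omega
    obtain ⟨N, rfl⟩ := Multiset.exists_cons_of_mem hmem
    have h := kappa_le x d N (fun c hc => hM c (Multiset.mem_cons_of_mem hc))
    rw [Multiset.sum_cons] at hs
    rw [Multiset.card_cons] at hk
    have : N.sum = m - x ^ j := by omega
    rw [this] at h
    omega
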